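/- arXiv:2409.02582 — 2 statements merged into one kernel-verified Lean document; each statement's English description precedes it below -/
import Mathlib

section
/- For all integers p ≥ 1 and t_1 ≥ 1, the list L consisting of p−1 copies of −2, followed by the single entry −(p+3), followed by t_1−1 copies of −2, has negative continued fraction L⁻ = −1 − (1 + t_1 + p·t_1)/(−1 + p + p²·t_1); moreover N(L) = p+3 if t_1 = 1 and N(L) = 2(p+2) if t_1 ≥ 2. (This is the computation for case (d) with t_0 = 1 in the classification.) -/
/-- The negative continued fraction `[r_0, …, r_k]⁻` of a list of rationals:
`[r_k]⁻ = r_k` and `[r_i, …, r_k]⁻ = r_i − 1/[r_{i+1}, …, r_k]⁻`.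
(The value on the empty list is an irrelevant junk value.) -/
def ncf : List ℚ → ℚ
  | [] => 0
  | [r] => r
  | r :: rs => r - 1 / ncf rs

/-- `N([r_0, …, r_k]) = |(r_0+1)(r_1+1)⋯(r_{k−1}+1)·r_k|`, with `N([r]) = |r|`. -/
def Nval : List ℤ → ℤ
  | [] => 1
  | [r] => |r|
  | r :: rs => |r + 1| * Nval rs

theorem ncf_cons (r : ℚ) (l : List ℚ) : ncf (r :: l) = r - 1 / ncf l := by
  cases l <;> simp [ncf]

theorem ncf_rep (n : ℕ) : ncf (List.replicate n (-2 : ℚ)) = -((n : ℚ) + 1) / n ∨ n = 0 := by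
  induction n with
  | zero => right; rfl
  | succ n ih =>
    left
    rw [List.replicate_succ, ncf_cons]
    rcases ih with ih | ih
    · rw [ih]
      rcases Nat.eq_zero_or_pos n with h | h
      · subst h; norm_num
      · have h' : (0 : ℚ) < n := by exact_mod_cast h
        have h2 : -((n : ℚ) + 1) ≠ 0 := by linarith
        push_cast
        field_simp
        ring
    · subst ih; norm_num [ncf]

theorem ncf_pre (m : ℕ) (l : List ℚ) (a : ℚ) (ha : 0 < a) (hl : ncf l = -1 - a) :
    ncf (List.replicate m (-2 : ℚ) ++ l) = -1 - a / (1 + m * a) := by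
  induction m with
  | zero => simp [hl]
  | succ m ih =>
    rw [List.replicate_succ, List.cons_append, ncf_cons, ih]
    have h1 : 0 < 1 + m * a := by positivity
    have h2 : 0 < 1 + (m + 1) * a := by positivity
    have h3 : -1 - a / (1 + m * a) = -((1 + (m + 1) * a) / (1 + m * a)) := by
      field_simp
      ring
    rw [h3]
    push_cast
    field_simp
    ring

theorem Nval_cons (r : ℤ) (l : List ℤ) (h : l ≠ []) : Nval (r :: l) = |r + 1| * Nval l := by
  cases l with
  | nil => exact absurd rfl h
  | cons a l => simp [Nval]

theorem Nval_pre (m : ℕ) (l : List ℤ) (h : l ≠ []) :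
    Nval (List.replicate m (-2 : ℤ) ++ l) = Nval l := by
  induction m with
  | zero => simp
  | succ m ih =>
    rw [List.replicate_succ, List.cons_append, Nval_cons _ _ (by simp [h]), ih]
    norm_num

theorem stmt5 (p t1 : ℤ) (hp : 1 ≤ p) (h1 : 1 ≤ t1) :
    ncf ((List.replicate (p - 1).toNat (-2 : ℤ) ++ [-(p + 3)] ++
            List.replicate (t1 - 1).toNat (-2 : ℤ)).map (fun r : ℤ => (r : ℚ))) =
        -1 - (1 + (t1 : ℚ) + (p : ℚ) * t1) / (-1 + (p : ℚ) + (p : ℚ) ^ 2 * t1) ∧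
      (t1 = 1 → Nval (List.replicate (p - 1).toNat (-2 : ℤ) ++ [-(p + 3)] ++
          List.replicate (t1 - 1).toNat (-2 : ℤ)) = p + 3) ∧
      (2 ≤ t1 → Nval (List.replicate (p - 1).toNat (-2 : ℤ) ++ [-(p + 3)] ++
          List.replicate (t1 - 1).toNat (-2 : ℤ)) = 2 * (p + 2)) := by
  obtain ⟨m, rfl⟩ : ∃ m : ℕ, p = m + 1 := ⟨(p - 1).toNat, by omega⟩
  obtain ⟨n, rfl⟩ : ∃ n : ℕ, t1 = n + 1 := ⟨(t1 - 1).toNat, by omega⟩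
  simp only [add_sub_cancel_right, Int.toNat_natCast, List.append_assoc, List.singleton_append]
  refine ⟨?_, ?_, ?_⟩
  · have hmid : ncf ((-(((m : ℚ) + 1) + 3)) :: List.replicate n (-2 : ℚ)) =
        -1 - (((m : ℚ) + 2) * (n + 1) + 1) / (n + 1) := by
      rw [ncf_cons]
      rcases ncf_rep n with h | h
      · rw [h]
        have h2 : -((n : ℚ) + 1) ≠ 0 := by
          have : (0 : ℚ) ≤ n := by positivity
          linarith
        rw [one_div_div]
        have h3 : (n : ℚ) + 1 ≠ 0 := by positivity
        field_simp
        ring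
      · subst h; norm_num [ncf]; ring
    have := ncf_pre m _ _ (by positivity) hmid
    simp only [List.map_append, List.map_replicate, List.map_cons]
    push_cast
    rw [this]
    have e : (-1 : ℚ) + (m + 1) + (m + 1) ^ 2 * (n + 1) = m + (m + 1) ^ 2 * (n + 1) := by ring
    rw [e]
    have h4 : (0 : ℚ) < m + (m + 1) ^ 2 * (n + 1) := by positivity
    congr 1
    rw [div_eq_div_iff (by positivity) h4.ne']
    field_simp
    ring
  · intro h
    have : n = 0 := by omega
    subst this
    rw [Nval_pre _ _ (by simp)]
    simp only [List.replicate_zero, Nval]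
    rw [abs_of_neg (by omega)]
    ring
  · intro h
    obtain ⟨k, rfl⟩ : ∃ k, n = k + 1 := ⟨n - 1, by omega⟩
    rw [Nval_pre _ _ (by simp), Nval_cons _ _ (by simp), List.replicate_succ',
      Nval_pre _ _ (by simp), abs_of_neg (by omega)]
    norm_num [Nval]
    ring
end

section
/- For every integer p ≥ 0, the (p+4)×(p+4) symmetric integer matrix M₁ whose first row is (0, 3, 1, 1, …, 1) and first column is (0, 3, 1, …, 1)ᵗ, and whose lower-right (p+3)×(p+3) block has (1,1)-entry −2, remaining diagonal entries 0, and all off-diagonal entries −1, has determinant 1 + 5p. (This is the determinant of the extended linking matrix of L₁ in case (c2) of the classification.) -/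
/-- The extended linking matrix `M₁` of case (c2): a `(p+4)×(p+4)` symmetric integer
matrix with first row `(0, 3, 1, …, 1)`, first column `(0, 3, 1, …, 1)ᵗ`, and whose
lower-right `(p+3)×(p+3)` block has `(1,1)`-entry `−2`, remaining diagonal entries `0`,
and all off-diagonal entries `−1`. -/
def M1 (p : ℕ) : Matrix (Fin (p + 4)) (Fin (p + 4)) ℤ :=
  Matrix.of fun i j =>
    if (i : ℕ) = 0 then
      (if (j : ℕ) = 0 then 0 else if (j : ℕ) = 1 then 3 else 1)
    else if (j : ℕ) = 0 then
      (if (i : ℕ) = 1 then 3 else 1)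
    else if i = j then (if (i : ℕ) = 1 then -2 else 0)
    else -1

/-- Indicator matrix of the three classes `{0}`, `{1}`, `{2, 3, …}` of indices. -/
def auxU (p : ℕ) : Matrix (Fin (p + 4)) (Fin 3) ℤ :=
  Matrix.of fun i => if (i : ℕ) = 0 then ![1, 0, 0] else if (i : ℕ) = 1 then ![0, 1, 0]
    else ![0, 0, 1]

/-- The three distinct rows of `M1 p - 1`. -/
def auxV (p : ℕ) : Matrix (Fin 3) (Fin (p + 4)) ℤ :=
  Matrix.of fun a j => if (j : ℕ) = 0 then ![-1, 3, 1] a else if (j : ℕ) = 1 then ![3, -3, -1] a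
    else ![1, -1, -1] a

theorem M1_eq (p : ℕ) : M1 p = 1 + auxU p * auxV p := by
  ext i j
  simp only [M1, auxU, auxV, Matrix.add_apply, Matrix.mul_apply, Fin.sum_univ_three,
    Matrix.of_apply, Matrix.one_apply, Fin.ext_iff]
  split_ifs <;> first | omega | simp

theorem VU_eq (p : ℕ) : 1 + auxV p * auxU p =
    !![0, 3, (p : ℤ) + 2; 3, -2, -((p : ℤ) + 2); 1, -1, 1 - ((p : ℤ) + 2)] := by
  ext a b
  fin_cases a <;> fin_cases b <;>
    simp [auxU, auxV, Matrix.mul_apply, Fin.sum_univ_succ (n := p + 3),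
      Fin.sum_univ_succ (n := p + 2)] <;> ring

theorem stmt10 (p : ℕ) : (M1 p).det = 1 + 5 * p := by
  rw [M1_eq, Matrix.det_one_add_mul_comm, VU_eq, Matrix.det_fin_three]
  simp
  ring
end
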